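/- Polarized resolution modulo fails in finite time on Example 3: encode the ground atom P(fⁿ(a)) as the natural number n, so the ground instances of the one-way clause P(f(x)) ∨ ¬P(x) are the theory clauses Tₙ = {(n+1)⁺, n⁻} for n : ℕ, each with selected literal (n+1)⁺, and the only other clause is {0⁺}. Then, under resolution restricted so that at most one parent is a theory clause and the literal resolved upon in a theory-clause parent is its selected literal, the set of clauses derivable from {Tₙ : n : ℕ} ∪ {{0⁺}} is exactly this initial set; in particular the empty clause is not derivable. -/

import Mathlib

/-!
The only inference step needs a derivable clause containing a negative literal `a⁻` as its
second parent. By induction both parents are initial, and the only initial clauses with a negative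
literal are the theory clauses `Tₙ`. The literal resolved upon in a theory clause must be its
selected literal, which is positive, so no inference is ever possible and the initial set is already
closed. The empty clause is not initial, hence not derivable.
-/

/-- A literal is an atom (a natural number, encoding P(fⁿ(a))) with a polarity
(`true` = positive). -/
abbrev Lit := ℕ × Bool

/-- A clause is a finite set of literals. -/
abbrev Clause := Finset Lit

/-- Restricted resolution derivability, given a set `theory` of theory
(one-way) clauses and a selection relation `Sel` (relating each theory clause
to its selected literal): the least set of clauses containing `S` and closed
under resolution inferences (deriving `C ∪ D` from parents `C ∪ {a⁺}` and
`D ∪ {a⁻}` with `a⁺ ∉ C`, `a⁻ ∉ D`) in which at most one parent is a theory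
clause and, whenever a parent is a theory clause, the literal resolved upon in
that parent is its selected literal. -/
inductive RDer (theory : Set Clause) (Sel : Clause → Lit → Prop) (S : Set Clause) :
    Clause → Prop
  | mem {C} : C ∈ S → RDer theory Sel S C
  | res {a : ℕ} {C D : Clause} :
      RDer theory Sel S (insert (a, true) C) →
      RDer theory Sel S (insert (a, false) D) →
      (a, true) ∉ C → (a, false) ∉ D →
      ¬(insert (a, true) C ∈ theory ∧ insert (a, false) D ∈ theory) →
      (insert (a, true) C ∈ theory → Sel (insert (a, true) C) (a, true)) →
      (insert (a, false) D ∈ theory → Sel (insert (a, false) D) (a, false)) →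
      RDer theory Sel S (C ∪ D)

/-- The theory clause Tₙ = {(n+1)⁺, n⁻}, encoding the ground instance
P(fⁿ⁺¹(a)) ∨ ¬P(fⁿ(a)) of the one-way clause P(f(x)) ∨ ¬P(x). -/
def T (n : ℕ) : Clause := {(n + 1, true), (n, false)}

/-- The theory consists of the clauses Tₙ for all n. -/
def theory : Set Clause := {C | ∃ n : ℕ, C = T n}

/-- The selected literal of Tₙ is (n+1)⁺. -/
def Sel : Clause → Lit → Prop := fun C l => ∃ n : ℕ, C = T n ∧ l = (n + 1, true)

/-- The initial clause set: the theory clauses Tₙ together with {0⁺}. -/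
def S₀ : Set Clause := theory ∪ {{(0, true)}}

/-- In an initial clause a negative literal can only come from a theory clause. -/
theorem mem_theory_of_neg_mem {C : Clause} {a : ℕ} (hC : C ∈ S₀) (ha : (a, false) ∈ C) :
    C ∈ theory := by
  rcases hC with hC | hC
  · exact hC
  · rw [Set.mem_singleton_iff.mp hC] at ha
    simp at ha

theorem not_sel_neg (C : Clause) (a : ℕ) : ¬ Sel C (a, false) := by
  rintro ⟨n, -, h⟩
  simp at h

theorem mem_of_rDer {C : Clause} (h : RDer theory Sel S₀ C) : C ∈ S₀ := by
  induction h with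
  | mem h => exact h
  | res _ _ _ _ _ _ hsel _ ihD =>
    exact absurd (hsel (mem_theory_of_neg_mem ihD (Finset.mem_insert_self _ _)))
      (not_sel_neg _ _)

theorem empty_notMem_S₀ : (∅ : Clause) ∉ S₀ := by
  rintro (⟨n, h⟩ | h)
  · exact Finset.insert_ne_empty _ _ h.symm
  · exact Finset.singleton_ne_empty _ (Set.mem_singleton_iff.mp h).symm

/-- Polarized resolution modulo fails in finite time on Example 3: the set of
clauses derivable under the combined restriction is exactly the initial set;
in particular the empty clause is not derivable. -/
theorem stmt11 :
    (∀ C : Clause, RDer theory Sel S₀ C ↔ C ∈ S₀) ∧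
    ¬ RDer theory Sel S₀ (∅ : Clause) := by
  exact ⟨fun _ => ⟨mem_of_rDer, RDer.mem⟩, fun h => empty_notMem_S₀ (mem_of_rDer h)⟩
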